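/- arXiv:1004.1311 — 2 statements merged into one kernel-verified Lean document; each statement's English description precedes it below -/
import Mathlib

section
/- For every proper face γ of Γ, the set σ(γ) = {a ∈ ℝ_{≥0}^n : γ_a = γ} is relatively open, i.e., σ(γ) is an open subset of its affine span in ℝ^n. -/
/-!
Fix `α₀ ∈ S` lying on the face `γ`, and consider the finitely many test points of `Γ` consisting
of the points of `S` together with the `α₀ + e_i`. A vector `a` lies in the orthant with `α₀` on
its face exactly when every test point `p` satisfies `⟨a, p - α₀⟩ ≥ 0`; and for `a ∈ σ(γ)` this
value vanishes exactly when `p ∈ γ`, so the vanishing pattern is the same on all of `σ(γ)`.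
Conversely the vanishing pattern determines the face (`faceAt_subset`): if it is the same for `a`
and `c`, then `C • a - c` is nonnegative on the `p - α₀` for large `C`, hence nonnegative on
`Γ - α₀`, which shows that `γ_a ⊆ γ_c`.

The equations `⟨a, p - α₀⟩ = 0` for `p ∈ γ` persist on the affine span of `σ(γ)`, so inside that
span `σ(γ)` is cut out by the finitely many strict inequalities `⟨a, p - α₀⟩ > 0` for `p ∉ γ`
(`mem_sigmaCone_iff`).
-/

open Finset Set Pointwise

noncomputable section

/-- Standard inner product on `ℝ^n`. -/
def dotR {n : ℕ} (a b : Fin n → ℝ) : ℝ := ∑ i, a i * b i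

/-- The nonnegative orthant `ℝ_{≥0}^n`. -/
def nonnegOrthant (n : ℕ) : Set (Fin n → ℝ) := {x | ∀ i, 0 ≤ x i}

/-- Coercion of an integer lattice point to `ℝ^n`. -/
def natCastVec {n : ℕ} (α : Fin n → ℕ) : Fin n → ℝ := fun i => (α i : ℝ)

/-- The Newton polyhedron of a finite set `S ⊆ ℕ^n`: the convex hull of `S + ℝ_{≥0}^n`. -/
def newtonPolyhedron {n : ℕ} (S : Finset (Fin n → ℕ)) : Set (Fin n → ℝ) :=
  convexHull ℝ {x | ∃ α ∈ S, ∃ v ∈ nonnegOrthant n, x = natCastVec α + v}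

/-- `l_Γ(a) = inf {⟨a,b⟩ : b ∈ Γ}`. -/
def lGamma {n : ℕ} (S : Finset (Fin n → ℕ)) (a : Fin n → ℝ) : ℝ :=
  sInf ((fun b => dotR a b) '' newtonPolyhedron S)

/-- `γ_a = {b ∈ Γ : ⟨a,b⟩ = l_Γ(a)}`. -/
def faceAt {n : ℕ} (S : Finset (Fin n → ℕ)) (a : Fin n → ℝ) : Set (Fin n → ℝ) :=
  {b ∈ newtonPolyhedron S | dotR a b = lGamma S a}

/-- A face of `Γ` is a set of the form `γ_a` with `a ∈ ℝ_{≥0}^n`. -/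
def IsFaceOf {n : ℕ} (S : Finset (Fin n → ℕ)) (γ : Set (Fin n → ℝ)) : Prop :=
  ∃ a ∈ nonnegOrthant n, γ = faceAt S a

/-- A proper face is a face different from `Γ`. -/
def IsProperFaceOf {n : ℕ} (S : Finset (Fin n → ℕ)) (γ : Set (Fin n → ℝ)) : Prop :=
  IsFaceOf S γ ∧ γ ≠ newtonPolyhedron S

/-- `σ(γ) = {a ∈ ℝ_{≥0}^n : γ_a = γ}`. -/
def sigmaCone {n : ℕ} (S : Finset (Fin n → ℕ)) (γ : Set (Fin n → ℝ)) : Set (Fin n → ℝ) :=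
  {a ∈ nonnegOrthant n | faceAt S a = γ}

/-- `σ̄(γ)`, the closure of `σ(γ)` in `ℝ^n`. -/
def sigmaConeCl {n : ℕ} (S : Finset (Fin n → ℕ)) (γ : Set (Fin n → ℝ)) : Set (Fin n → ℝ) :=
  closure (sigmaCone S γ)

/-- `F` is a face of the closed convex cone `C`: `F = {x ∈ C | λ x = 0}` for a linear form
`λ` nonnegative on `C`. -/
def IsConeFaceOf {n : ℕ} (C F : Set (Fin n → ℝ)) : Prop :=
  ∃ lam : (Fin n → ℝ) →ₗ[ℝ] ℝ, (∀ x ∈ C, 0 ≤ lam x) ∧ F = {x ∈ C | lam x = 0}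

/-- The dimension of a subset of `ℝ^n`: the dimension of its affine span. -/
def dimSet {n : ℕ} (s : Set (Fin n → ℝ)) : ℕ :=
  Module.finrank ℝ (affineSpan ℝ s).direction

/-- `ℝ_{≥0}^I = {x ∈ ℝ_{≥0}^n : x_i = 0 for i ∉ I}`. -/
def orthantOn (n : ℕ) (I : Set (Fin n)) : Set (Fin n → ℝ) :=
  {x | (∀ i, 0 ≤ x i) ∧ ∀ i ∉ I, x i = 0}

/-- `ℝ_{≥0}^{n₁} × ℝ_{>0}^{n₂} = {a ∈ ℝ_{≥0}^n : a_i > 0 for i > n₁}`. -/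
def mixedOrthant (n n₁ : ℕ) : Set (Fin n → ℝ) :=
  {x | (∀ i, 0 ≤ x i) ∧ ∀ i : Fin n, n₁ ≤ (i : ℕ) → 0 < x i}

/-- The test points attached to `α₀`: the `α₀ + e_i` and the elements of `S`. -/
def testPoint {n : ℕ} (S : Finset (Fin n → ℕ)) (α₀ : Fin n → ℕ) :
    Fin n ⊕ S → (Fin n → ℝ) :=
  Sum.elim (fun i => natCastVec α₀ + Pi.single i 1) (fun β => natCastVec β.1)

/-- The value `⟨a, p_j - α₀⟩` at the `j`-th test point `p_j`. -/
def gap {n : ℕ} (S : Finset (Fin n → ℕ)) (α₀ : Fin n → ℕ) (j : Fin n ⊕ S)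
    (a : Fin n → ℝ) : ℝ :=
  dotR a (testPoint S α₀ j - natCastVec α₀)

section

variable {n : ℕ} {S : Finset (Fin n → ℕ)} {α₀ : Fin n → ℕ}

lemma dotR_eq (a b : Fin n → ℝ) : dotR a b = a ⬝ᵥ b := rfl

lemma gap_inl (i : Fin n) (a : Fin n → ℝ) : gap S α₀ (Sum.inl i) a = a i := by
  simp [gap, testPoint, dotR_eq]

lemma gap_inr (β : S) (a : Fin n → ℝ) :
    gap S α₀ (Sum.inr β) a = dotR a (natCastVec β.1) - dotR a (natCastVec α₀) := by
  simp [gap, testPoint, dotR_eq, dotProduct_sub]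

lemma continuous_gap (j : Fin n ⊕ S) : Continuous (gap S α₀ j) :=
  show Continuous fun a : Fin n → ℝ => ∑ i, a i * (testPoint S α₀ j - natCastVec α₀) i by
    generalize testPoint S α₀ j - natCastVec α₀ = v
    fun_prop

lemma natCastVec_mem {β : Fin n → ℕ} (hβ : β ∈ S) : natCastVec β ∈ newtonPolyhedron S :=
  subset_convexHull ℝ _ ⟨β, hβ, 0, fun _ => le_rfl, by simp⟩

lemma testPoint_mem (h0 : α₀ ∈ S) (j : Fin n ⊕ S) :
    testPoint S α₀ j ∈ newtonPolyhedron S := by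
  rcases j with i | β
  · refine subset_convexHull ℝ _ ⟨α₀, h0, Pi.single i 1, fun k => ?_, rfl⟩
    by_cases h : k = i
    · subst h; simp
    · simp [h]
  · exact natCastVec_mem β.2

/-- A linear form with nonnegative gaps attains its minimum over `Γ` at `α₀`. -/
lemma dotR_le_of_gap_nonneg {a : Fin n → ℝ} (ha : ∀ j, 0 ≤ gap S α₀ j a)
    {b : Fin n → ℝ} (hb : b ∈ newtonPolyhedron S) : dotR a (natCastVec α₀) ≤ dotR a b := by
  have hconv : Convex ℝ {b : Fin n → ℝ | dotR a (natCastVec α₀) ≤ dotR a b} :=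
    convex_halfSpace_ge (f := fun b => dotR a b)
      ⟨fun x y => dotProduct_add a x y, fun c x => by simp [dotR_eq]⟩ _
  refine convexHull_min ?_ hconv hb
  rintro _ ⟨β, hβ, v, hv, rfl⟩
  have h1 := ha (Sum.inr ⟨β, hβ⟩)
  rw [gap_inr] at h1
  have h2 : 0 ≤ dotR a v := Finset.sum_nonneg fun i _ =>
    mul_nonneg (by simpa [gap_inl] using ha (Sum.inl i)) (hv i)
  have h3 : dotR a (natCastVec β + v) = dotR a (natCastVec β) + dotR a v :=
    dotProduct_add _ _ _
  simp only [Set.mem_ofPred_eq, h3]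
  linarith

lemma lGamma_eq (h0 : α₀ ∈ S) {a : Fin n → ℝ} (ha : ∀ j, 0 ≤ gap S α₀ j a) :
    lGamma S a = dotR a (natCastVec α₀) := by
  have : IsLeast ((fun b => dotR a b) '' newtonPolyhedron S) (dotR a (natCastVec α₀)) := by
    refine ⟨⟨_, natCastVec_mem h0, rfl⟩, ?_⟩
    rintro _ ⟨b, hb, rfl⟩
    exact dotR_le_of_gap_nonneg ha hb
  exact this.csInf_eq

lemma testPoint_mem_faceAt_iff (h0 : α₀ ∈ S) {a : Fin n → ℝ} (ha : ∀ j, 0 ≤ gap S α₀ j a)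
    (j : Fin n ⊕ S) : testPoint S α₀ j ∈ faceAt S a ↔ gap S α₀ j a = 0 := by
  have : gap S α₀ j a = dotR a (testPoint S α₀ j) - dotR a (natCastVec α₀) :=
    dotProduct_sub _ _ _
  simp only [faceAt, Set.mem_ofPred_eq, testPoint_mem h0 j, true_and, lGamma_eq h0 ha, this,
    sub_eq_zero]

/-- The face grows when the set of vanishing gaps grows. -/
lemma faceAt_subset (h0 : α₀ ∈ S) {a c : Fin n → ℝ} (ha : ∀ j, 0 ≤ gap S α₀ j a)
    (hc : ∀ j, 0 ≤ gap S α₀ j c) (h : ∀ j, gap S α₀ j a = 0 → gap S α₀ j c = 0) :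
    faceAt S a ⊆ faceAt S c := by
  let C : ℝ := ∑ j, gap S α₀ j c / gap S α₀ j a
  have hlin (b : Fin n → ℝ) : dotR (C • a - c) b = C * dotR a b - dotR c b := by
    simp [dotR_eq, sub_dotProduct, smul_dotProduct]
  have hC (j) : 0 ≤ gap S α₀ j (C • a - c) := by
    have h1 : gap S α₀ j (C • a - c) = C * gap S α₀ j a - gap S α₀ j c := hlin _
    rw [h1]
    rcases (ha j).eq_or_lt with h2 | h2
    · rw [← h2, h j h2.symm]; simp
    · have h3 : gap S α₀ j c / gap S α₀ j a ≤ C :=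
        Finset.single_le_sum (f := fun j => gap S α₀ j c / gap S α₀ j a)
          (fun k _ => div_nonneg (hc k) (ha k)) (Finset.mem_univ j)
      rw [div_le_iff₀ h2] at h3
      linarith
  rintro b ⟨hb, hab⟩
  refine ⟨hb, ?_⟩
  rw [lGamma_eq h0 ha] at hab
  rw [lGamma_eq h0 hc]
  have h1 := dotR_le_of_gap_nonneg hC hb
  rw [hlin, hlin, hab] at h1
  have h2 := dotR_le_of_gap_nonneg hc hb
  linarith

lemma gap_nonneg (h0 : α₀ ∈ S) {a : Fin n → ℝ} (ha : a ∈ nonnegOrthant n)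
    (hmem : natCastVec α₀ ∈ faceAt S a) (j : Fin n ⊕ S) : 0 ≤ gap S α₀ j a := by
  have hbdd : BddBelow ((fun b => dotR a b) '' newtonPolyhedron S) := by
    obtain ⟨β, -, hmin⟩ := S.exists_min_image (fun α => dotR a (natCastVec α)) ⟨α₀, h0⟩
    refine ⟨dotR a (natCastVec β), ?_⟩
    rintro _ ⟨b, hb, rfl⟩
    refine dotR_le_of_gap_nonneg (fun k => ?_) hb
    rcases k with i | δ
    · rw [gap_inl]; exact ha i
    · rw [gap_inr]; exact sub_nonneg.2 (hmin _ δ.2)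
  have h1 : dotR a (natCastVec α₀) ≤ dotR a (testPoint S α₀ j) := by
    rw [hmem.2]
    exact csInf_le hbdd ⟨_, testPoint_mem h0 j, rfl⟩
  have h2 : gap S α₀ j a = dotR a (testPoint S α₀ j) - dotR a (natCastVec α₀) :=
    dotProduct_sub _ _ _
  linarith

/-- Every face contains a point of `S`. -/
lemma exists_natCastVec_mem_faceAt (hS : S.Nonempty) {a : Fin n → ℝ}
    (ha : a ∈ nonnegOrthant n) : ∃ α ∈ S, natCastVec α ∈ faceAt S a := by
  obtain ⟨β, hβ, hmin⟩ := S.exists_min_image (fun α => dotR a (natCastVec α)) hS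
  refine ⟨β, hβ, natCastVec_mem hβ, (lGamma_eq hβ fun k => ?_).symm⟩
  rcases k with i | δ
  · rw [gap_inl]; exact ha i
  · rw [gap_inr]; exact sub_nonneg.2 (hmin _ δ.2)

/-- Inside its affine span, `σ(γ)` is cut out by the strict inequalities coming from the test
points outside `γ`. -/
lemma mem_sigmaCone_iff (h0 : α₀ ∈ S) {γ : Set (Fin n → ℝ)} (hne : (sigmaCone S γ).Nonempty)
    (hmem : natCastVec α₀ ∈ γ) {x : Fin n → ℝ} (hx : x ∈ affineSpan ℝ (sigmaCone S γ)) :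
    x ∈ sigmaCone S γ ↔ ∀ j, testPoint S α₀ j ∉ γ → 0 < gap S α₀ j x := by
  have hnn {a} (ha : a ∈ sigmaCone S γ) (j) : 0 ≤ gap S α₀ j a :=
    gap_nonneg h0 ha.1 (ha.2.symm ▸ hmem) j
  have hiff {a} (ha : a ∈ sigmaCone S γ) (j) : testPoint S α₀ j ∈ γ ↔ gap S α₀ j a = 0 := by
    rw [← testPoint_mem_faceAt_iff h0 (hnn ha), ha.2]
  refine ⟨fun h j hj => (hnn h j).lt_of_ne fun h' => hj ((hiff h j).2 h'.symm), fun h => ?_⟩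
  have hzero (j) (hj : testPoint S α₀ j ∈ γ) : gap S α₀ j x = 0 := by
    refine affineSpan_induction (p := fun x => gap S α₀ j x = 0) hx
      (fun a ha => (hiff ha j).1 hj) fun c u v w hu hv hw => ?_
    simp only [gap, dotR_eq, vsub_eq_sub, vadd_eq_add, add_dotProduct, smul_dotProduct,
      sub_dotProduct] at hu hv hw ⊢
    rw [hu, hv, hw]; simp
  have hxnn (j) : 0 ≤ gap S α₀ j x := by
    by_cases hj : testPoint S α₀ j ∈ γ
    · exact (hzero j hj).ge
    · exact (h j hj).le
  have hxiff (j) : testPoint S α₀ j ∈ γ ↔ gap S α₀ j x = 0 :=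
    ⟨hzero j, fun h' => by_contra fun hj => (h j hj).ne' h'⟩
  obtain ⟨a, ha⟩ := hne
  refine ⟨fun i => by simpa [gap_inl] using hxnn (Sum.inl i), ?_⟩
  rw [← ha.2]
  exact (faceAt_subset h0 hxnn (hnn ha) fun j hj => (hiff ha j).1 ((hxiff j).2 hj)).antisymm
    (faceAt_subset h0 (hnn ha) hxnn fun j hj => (hxiff j).1 ((hiff ha j).2 hj))

end

theorem sigmaCone_relatively_open {n : ℕ} (hn : 1 ≤ n) (S : Finset (Fin n → ℕ))
    (hS : S.Nonempty) (hS0 : (0 : Fin n → ℕ) ∉ S)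
    (γ : Set (Fin n → ℝ)) (hγ : IsProperFaceOf S γ) :
    IsOpen {x : affineSpan ℝ (sigmaCone S γ) | (x : Fin n → ℝ) ∈ sigmaCone S γ} := by
  obtain ⟨⟨a, ha, rfl⟩, -⟩ := hγ
  obtain ⟨α₀, h0, hmem⟩ := exists_natCastVec_mem_faceAt hS ha
  have hset : {x : affineSpan ℝ (sigmaCone S (faceAt S a)) |
        (x : Fin n → ℝ) ∈ sigmaCone S (faceAt S a)} =
      ⋂ j, ⋂ (_ : testPoint S α₀ j ∉ faceAt S a),
        {x : affineSpan ℝ (sigmaCone S (faceAt S a)) | 0 < gap S α₀ j x} := by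
    ext x
    simp only [Set.mem_iInter, Set.mem_ofPred_eq]
    exact mem_sigmaCone_iff h0 ⟨a, ha, rfl⟩ hmem x.2
  rw [hset]
  refine isOpen_iInter_of_finite fun j => isOpen_iInter_of_finite fun _ => ?_
  exact isOpen_lt continuous_const ((continuous_gap j).comp continuous_subtype_val)
end
end

section
/- For every proper face γ of Γ, the closure σ̄(γ) of σ(γ) in ℝ^n equals {a ∈ ℝ_{≥0}^n : γ ⊆ γ_a}, and σ̄(γ) is a rational polyhedral cone, i.e., an intersection of finitely many closed half-spaces {x ∈ ℝ^n : λ(x) ≥ 0} where each λ is a linear form with integer coefficients. -/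
/-!
For `a` in the orthant, `⟨a, ·⟩` is bounded below on `Γ` by its minimum over `S`, so `γ_a` consists
of the points of `Γ` where `⟨a, ·⟩` is at most its value at every point of `S`
(`mem_faceAt_iff`). Hence `K = {a ≥ 0 | γ ⊆ γ_a}` is closed, and it contains `σ(γ)`. Conversely, if
`γ = γ_{a₀}` and `a ∈ K`, then `γ_{a + ε a₀} = γ_a ∩ γ_{a₀} = γ` for every `ε > 0`
(`faceAt_add_smul`), so `a` is a limit of points of `σ(γ)`.

For rationality, `γ` is generated by the points of `S` on it and the coordinate directions `e_i` with
`a₀ i = 0`, so for `a ≥ 0` the inclusion `γ ⊆ γ_a` amounts to finitely many integral conditions: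
`⟨a, β - α⟩ ≥ 0` for `α ∈ S ∩ γ`, `β ∈ S`, and `a i = 0` whenever `a₀ i = 0`
(`subset_faceAt_iff`). To see that these suffice without decomposing points of `γ`, one fixes
`α ∈ S ∩ γ` and takes `M` so large that `⟨a, b - α⟩ ≤ M ⟨a₀, b - α⟩` holds on all of
`S + ℝ_{≥0}^n`, hence on `Γ`; on `γ` the right side vanishes, so `⟨a, ·⟩ ≤ ⟨a, α⟩` there.
-/

open Finset Set Pointwise

noncomputable section

lemma dotR_add_right {n : ℕ} (a b c : Fin n → ℝ) : dotR a (b + c) = dotR a b + dotR a c := by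
  simp [dotR, mul_add, Finset.sum_add_distrib]

lemma dotR_smul_right {n : ℕ} (a b : Fin n → ℝ) (t : ℝ) : dotR a (t • b) = t * dotR a b := by
  simp only [dotR, Finset.mul_sum, Pi.smul_apply, smul_eq_mul]
  exact Finset.sum_congr rfl fun i _ => by ring

lemma dotR_add_left {n : ℕ} (a b c : Fin n → ℝ) : dotR (a + b) c = dotR a c + dotR b c := by
  simp [dotR, add_mul, Finset.sum_add_distrib]

lemma dotR_smul_left {n : ℕ} (a b : Fin n → ℝ) (t : ℝ) : dotR (t • a) b = t * dotR a b := by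
  simp only [dotR, Finset.mul_sum, Pi.smul_apply, smul_eq_mul]
  exact Finset.sum_congr rfl fun i _ => by ring

lemma dotR_nonneg {n : ℕ} {a v : Fin n → ℝ} (ha : a ∈ nonnegOrthant n)
    (hv : v ∈ nonnegOrthant n) : 0 ≤ dotR a v :=
  Finset.sum_nonneg fun i _ => mul_nonneg (ha i) (hv i)

lemma add_mem_newton {n : ℕ} {S : Finset (Fin n → ℕ)} {α : Fin n → ℕ} (hα : α ∈ S)
    {v : Fin n → ℝ} (hv : v ∈ nonnegOrthant n) : natCastVec α + v ∈ newtonPolyhedron S :=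
  subset_convexHull ℝ _ ⟨α, hα, v, hv, rfl⟩

lemma natCastVec_mem_newton {n : ℕ} {S : Finset (Fin n → ℕ)} {α : Fin n → ℕ} (hα : α ∈ S) :
    natCastVec α ∈ newtonPolyhedron S := by
  simpa using add_mem_newton hα (v := 0) fun _ => le_rfl

/-- An affine inequality valid on `S + ℝ_{≥0}^n` is valid on its convex hull `Γ`. -/
lemma le_dotR_of_mem_newton {n : ℕ} {S : Finset (Fin n → ℕ)} {a : Fin n → ℝ} {r : ℝ}
    (h : ∀ α ∈ S, ∀ v ∈ nonnegOrthant n, r ≤ dotR a (natCastVec α + v))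
    {b : Fin n → ℝ} (hb : b ∈ newtonPolyhedron S) : r ≤ dotR a b := by
  have hconv : Convex ℝ {b | r ≤ dotR a b} :=
    convex_halfSpace_ge ⟨dotR_add_right a, fun t b => dotR_smul_right a b t⟩ r
  refine convexHull_min ?_ hconv hb
  rintro _ ⟨α, hα, v, hv, rfl⟩
  exact h α hα v hv

lemma exists_isLeast {n : ℕ} {S : Finset (Fin n → ℕ)} (hS : S.Nonempty) {a : Fin n → ℝ}
    (ha : a ∈ nonnegOrthant n) :
    ∃ α ∈ S, lGamma S a = dotR a (natCastVec α) ∧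
      ∀ b ∈ newtonPolyhedron S, dotR a (natCastVec α) ≤ dotR a b := by
  obtain ⟨α, hα, hmin⟩ := S.exists_min_image (fun α => dotR a (natCastVec α)) hS
  have hle : ∀ b ∈ newtonPolyhedron S, dotR a (natCastVec α) ≤ dotR a b := fun b hb => by
    refine le_dotR_of_mem_newton (fun β hβ v hv => ?_) hb
    rw [dotR_add_right]
    linarith [hmin β hβ, dotR_nonneg ha hv]
  refine ⟨α, hα, IsLeast.csInf_eq ⟨⟨_, natCastVec_mem_newton hα, rfl⟩, ?_⟩, hle⟩
  rintro _ ⟨b, hb, rfl⟩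
  exact hle b hb

lemma mem_faceAt_iff {n : ℕ} {S : Finset (Fin n → ℕ)} (hS : S.Nonempty) {a : Fin n → ℝ}
    (ha : a ∈ nonnegOrthant n) {b : Fin n → ℝ} :
    b ∈ faceAt S a ↔
      b ∈ newtonPolyhedron S ∧ ∀ α ∈ S, dotR a b ≤ dotR a (natCastVec α) := by
  obtain ⟨α, hα, hl, hle⟩ := exists_isLeast hS ha
  refine and_congr_right fun hb => ⟨fun h β hβ => ?_, fun h => ?_⟩
  · rw [h, hl]
    exact hle _ (natCastVec_mem_newton hβ)
  · rw [hl]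
    exact le_antisymm (h α hα) (hle b hb)

lemma le_of_mem_faceAt {n : ℕ} {S : Finset (Fin n → ℕ)} (hS : S.Nonempty) {a : Fin n → ℝ}
    (ha : a ∈ nonnegOrthant n) {b c : Fin n → ℝ} (hb : b ∈ faceAt S a)
    (hc : c ∈ newtonPolyhedron S) : dotR a b ≤ dotR a c := by
  obtain ⟨α, hα, hl, hle⟩ := exists_isLeast hS ha
  rw [hb.2, hl]
  exact hle c hc

lemma exists_vertex_mem_faceAt {n : ℕ} {S : Finset (Fin n → ℕ)} (hS : S.Nonempty)
    {a : Fin n → ℝ} (ha : a ∈ nonnegOrthant n) : ∃ α ∈ S, natCastVec α ∈ faceAt S a := by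
  obtain ⟨α, hα, hl, -⟩ := exists_isLeast hS ha
  exact ⟨α, hα, natCastVec_mem_newton hα, hl.symm⟩

lemma add_smul_mem_orthant {n : ℕ} {a a₀ : Fin n → ℝ} (ha : a ∈ nonnegOrthant n)
    (ha₀ : a₀ ∈ nonnegOrthant n) {ε : ℝ} (hε : 0 < ε) : a + ε • a₀ ∈ nonnegOrthant n :=
  fun i => add_nonneg (ha i) (mul_nonneg hε.le (ha₀ i))

/-- If `γ_{a₀} ⊆ γ_a`, a positive perturbation of `a` towards `a₀` cuts out exactly `γ_{a₀}`. -/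
lemma faceAt_add_smul {n : ℕ} {S : Finset (Fin n → ℕ)} (hS : S.Nonempty) {a a₀ : Fin n → ℝ}
    (ha : a ∈ nonnegOrthant n) (ha₀ : a₀ ∈ nonnegOrthant n) (h : faceAt S a₀ ⊆ faceAt S a)
    {ε : ℝ} (hε : 0 < ε) : faceAt S (a + ε • a₀) = faceAt S a₀ := by
  have hae := add_smul_mem_orthant ha ha₀ hε
  ext c
  constructor
  · intro hc
    obtain ⟨α, hα, hαf⟩ := exists_vertex_mem_faceAt hS ha₀
    have h1 := le_of_mem_faceAt hS hae hc (natCastVec_mem_newton hα)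
    have h2 := le_of_mem_faceAt hS ha (h hαf) hc.1
    simp only [dotR_add_left, dotR_smul_left] at h1
    have h3 : dotR a₀ c ≤ dotR a₀ (natCastVec α) :=
      le_of_mul_le_mul_left (by linarith) hε
    exact (mem_faceAt_iff hS ha₀).2 ⟨hc.1, fun β hβ =>
      h3.trans (le_of_mem_faceAt hS ha₀ hαf (natCastVec_mem_newton hβ))⟩
  · intro hc
    refine (mem_faceAt_iff hS hae).2 ⟨hc.1, fun β hβ => ?_⟩
    have h1 := le_of_mem_faceAt hS ha₀ hc (natCastVec_mem_newton hβ)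
    have h2 := le_of_mem_faceAt hS ha (h hc) (natCastVec_mem_newton hβ)
    simp only [dotR_add_left, dotR_smul_left]
    have := mul_le_mul_of_nonneg_left h1 hε.le
    linarith

lemma continuous_dotR_left {n : ℕ} (b : Fin n → ℝ) : Continuous fun a => dotR a b := by
  unfold dotR
  fun_prop

lemma isClosed_setOf_subset_faceAt {n : ℕ} {S : Finset (Fin n → ℕ)} (hS : S.Nonempty)
    {γ : Set (Fin n → ℝ)} (hγ : γ ⊆ newtonPolyhedron S) :
    IsClosed {a ∈ nonnegOrthant n | γ ⊆ faceAt S a} := by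
  have hK : {a ∈ nonnegOrthant n | γ ⊆ faceAt S a} =
      {a | ∀ i, 0 ≤ a i} ∩
        {a | ∀ b ∈ γ, ∀ α ∈ S, dotR a b ≤ dotR a (natCastVec α)} := by
    ext a
    refine and_congr_right fun ha => forall₂_congr fun b hb => ?_
    rw [mem_faceAt_iff hS ha]
    exact and_iff_right (hγ hb)
  rw [hK]
  simp only [Set.ofPred_forall]
  refine (isClosed_iInter fun i => isClosed_le continuous_const (continuous_apply i)).inter ?_
  exact isClosed_iInter fun b => isClosed_iInter fun _ => isClosed_iInter fun α =>
    isClosed_iInter fun _ => isClosed_le (continuous_dotR_left b) (continuous_dotR_left _)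

lemma sigmaConeCl_faceAt {n : ℕ} {S : Finset (Fin n → ℕ)} (hS : S.Nonempty) {a₀ : Fin n → ℝ}
    (ha₀ : a₀ ∈ nonnegOrthant n) :
    sigmaConeCl S (faceAt S a₀) = {a ∈ nonnegOrthant n | faceAt S a₀ ⊆ faceAt S a} := by
  apply Set.Subset.antisymm
  · refine closure_minimal ?_ (isClosed_setOf_subset_faceAt hS fun b hb => hb.1)
    exact fun a ha => ⟨ha.1, ha.2.symm.subset⟩
  · rintro a ⟨ha, hsub⟩
    have hlim : Filter.Tendsto (fun ε : ℝ => a + ε • a₀) (nhdsWithin 0 (Set.Ioi 0)) (nhds a) := by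
      have hc : Continuous fun ε : ℝ => a + ε • a₀ := by fun_prop
      simpa using (hc.tendsto 0).mono_left nhdsWithin_le_nhds
    refine mem_closure_of_tendsto hlim ?_
    filter_upwards [self_mem_nhdsWithin] with ε hε
    exact ⟨add_smul_mem_orthant ha ha₀ hε, faceAt_add_smul hS ha ha₀ hsub hε⟩

lemma eventually_le_mul {p q : ℝ} (hp : 0 ≤ p) (h : p = 0 → q ≤ 0) :
    ∀ᶠ M : ℝ in Filter.atTop, q ≤ M * p := by
  rcases hp.eq_or_lt with hp | hp
  · simp [← hp, h hp.symm]
  · filter_upwards [Filter.eventually_ge_atTop (q / p)] with M hM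
    exact (div_le_iff₀ hp).1 hM

/-- `γ_{a₀} ⊆ γ_a` need only be tested on the points of `S` in `γ_{a₀}` and on the coordinate
directions along which `γ_{a₀}` is unbounded. -/
lemma subset_faceAt_iff {n : ℕ} {S : Finset (Fin n → ℕ)} (hS : S.Nonempty) {a a₀ : Fin n → ℝ}
    (ha₀ : a₀ ∈ nonnegOrthant n) (ha : a ∈ nonnegOrthant n) :
    faceAt S a₀ ⊆ faceAt S a ↔
      (∀ i, a₀ i = 0 → a i ≤ 0) ∧
      ∀ α ∈ S, ∀ β ∈ S, natCastVec α ∈ faceAt S a₀ →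
        dotR a (natCastVec α) ≤ dotR a (natCastVec β) := by
  obtain ⟨α, hα, hαf⟩ := exists_vertex_mem_faceAt hS ha₀
  constructor
  · refine fun h => ⟨fun i hi => ?_, fun β hβ δ hδ hβf =>
      le_of_mem_faceAt hS ha (h hβf) (natCastVec_mem_newton hδ)⟩
    have hdot : ∀ c : Fin n → ℝ, dotR c (Pi.single i 1) = c i := fun c => by
      simp [dotR, Pi.single_apply]
    have hv : (Pi.single i 1 : Fin n → ℝ) ∈ nonnegOrthant n := fun j => by
      by_cases hj : j = i <;> simp [hj]
    -- Since `a₀ i = 0`, the face also contains `α + e_i`.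
    have hmem : natCastVec α + Pi.single i 1 ∈ faceAt S a₀ :=
      ⟨add_mem_newton hα hv, by rw [dotR_add_right, hdot, hi, add_zero, hαf.2]⟩
    have := le_of_mem_faceAt hS ha (h hmem) (natCastVec_mem_newton hα)
    rw [dotR_add_right, hdot] at this
    linarith
  · rintro ⟨hrec, hvert⟩ b hb
    have h1 : ∀ᶠ M : ℝ in Filter.atTop, ∀ i, a i ≤ M * a₀ i :=
      Filter.eventually_all.2 fun i => eventually_le_mul (ha₀ i) (hrec i)
    have h2 : ∀ᶠ M : ℝ in Filter.atTop, ∀ β ∈ S,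
        dotR a (natCastVec β) - dotR a (natCastVec α) ≤
          M * (dotR a₀ (natCastVec β) - dotR a₀ (natCastVec α)) := by
      refine (Filter.eventually_all_finset S).2 fun β hβ => eventually_le_mul ?_ fun h0 => ?_
      · exact sub_nonneg.2 (le_of_mem_faceAt hS ha₀ hαf (natCastVec_mem_newton hβ))
      · have hβf : natCastVec β ∈ faceAt S a₀ :=
          ⟨natCastVec_mem_newton hβ, by rw [sub_eq_zero.1 h0, hαf.2]⟩
        exact sub_nonpos.2 (hvert β hβ α hα hβf)
    obtain ⟨M, hM1, hM2⟩ := (h1.and h2).exists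
    have key : M * dotR a₀ (natCastVec α) - dotR a (natCastVec α) ≤
        dotR (M • a₀ + (-1 : ℝ) • a) b := by
      refine le_dotR_of_mem_newton (fun β hβ v hv => ?_) hb.1
      have hcoef : M • a₀ + (-1 : ℝ) • a ∈ nonnegOrthant n := fun i => by
        simpa using hM1 i
      have hpos := dotR_nonneg hcoef hv
      have := hM2 β hβ
      rw [dotR_add_right]
      rw [dotR_add_left, dotR_smul_left, dotR_smul_left] at hpos ⊢
      rw [dotR_add_left, dotR_smul_left, dotR_smul_left]
      linarith
    rw [dotR_add_left, dotR_smul_left, dotR_smul_left, hb.2, ← hαf.2] at key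
    exact (mem_faceAt_iff hS ha).2 ⟨hb.1, fun β hβ =>
      le_trans (by linarith) (hvert α hα β hβ hαf)⟩

theorem sigmaConeCl_eq_and_rational_polyhedral {n : ℕ} (hn : 1 ≤ n)
    (S : Finset (Fin n → ℕ)) (hS : S.Nonempty) (hS0 : (0 : Fin n → ℕ) ∉ S)
    (γ : Set (Fin n → ℝ)) (hγ : IsProperFaceOf S γ) :
    sigmaConeCl S γ = {a ∈ nonnegOrthant n | γ ⊆ faceAt S a} ∧
    ∃ (m : ℕ) (c : Fin m → (Fin n → ℤ)),
      sigmaConeCl S γ = {x | ∀ j, 0 ≤ ∑ i, (c j i : ℝ) * x i} := by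
  classical
  obtain ⟨⟨a₀, ha₀, rfl⟩, -⟩ := hγ
  have hcl := sigmaConeCl_faceAt hS ha₀
  refine ⟨hcl, ?_⟩
  -- The normals: `e_i` for the orthant, `-e_i` where `a₀ i = 0`, and `β - α` for `α ∈ S ∩ γ`.
  let T : Finset (Fin n → ℤ) :=
    Finset.univ.image (fun i => Pi.single i 1) ∪
    ((Finset.univ.filter fun i => a₀ i = 0).image (fun i => Pi.single i (-1)) ∪
    ((S ×ˢ S).filter fun p => natCastVec p.1 ∈ faceAt S a₀).image
      (fun p i => (p.2 i : ℤ) - (p.1 i : ℤ)))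
  have hT : ∀ x : Fin n → ℝ, (∀ c ∈ T, 0 ≤ ∑ i, (c i : ℝ) * x i) ↔
      x ∈ nonnegOrthant n ∧ (∀ i, a₀ i = 0 → x i ≤ 0) ∧
      ∀ α ∈ S, ∀ β ∈ S, natCastVec α ∈ faceAt S a₀ →
        dotR x (natCastVec α) ≤ dotR x (natCastVec β) := by
    intro x
    have hs : ∀ (i : Fin n) (z : ℤ),
        ∑ j, ((Pi.single i z : Fin n → ℤ) j : ℝ) * x j = z * x i := fun i z => by
      rw [Finset.sum_eq_single i] <;> simp +contextual
    have hd : ∀ α β : Fin n → ℕ,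
        ∑ i, (((β i : ℤ) - (α i : ℤ) : ℤ) : ℝ) * x i =
          dotR x (natCastVec β) - dotR x (natCastVec α) := fun α β => by
      simp only [dotR, natCastVec, ← Finset.sum_sub_distrib]
      exact Finset.sum_congr rfl fun i _ => by push_cast; ring
    simp only [T, Finset.forall_mem_union, Finset.forall_mem_image, Finset.mem_filter,
      Finset.mem_univ, true_and, Finset.mem_product, Prod.forall, hs, hd, forall_const]
    refine and_congr (by simp [nonnegOrthant]) (and_congr (by simp) ?_)
    exact ⟨fun h α hα β hβ hf => sub_nonneg.1 (h α β ⟨⟨hα, hβ⟩, hf⟩),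
      fun h α β hp => sub_nonneg.2 (h α hp.1.1 β hp.1.2 hp.2)⟩
  refine ⟨T.card, fun j => (T.equivFin.symm j : Fin n → ℤ), ?_⟩
  rw [hcl]
  ext x
  have hfin : (∀ j : Fin T.card, 0 ≤ ∑ i, ((T.equivFin.symm j : Fin n → ℤ) i : ℝ) * x i) ↔
      ∀ c ∈ T, 0 ≤ ∑ i, (c i : ℝ) * x i :=
    (T.equivFin.symm.forall_congr_left).trans (by simp)
  rw [Set.mem_ofPred_eq, Set.mem_ofPred_eq, hfin, hT x]
  exact and_congr_right fun hx => subset_faceAt_iff hS ha₀ hx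
end
end
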